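/- arXiv:2212.05152 — 2 statements merged into one kernel-verified Lean document; each statement's English description precedes it below -/
import Mathlib

section
/- Let X and Y be compact metric spaces and let T : C(Y) → USC(X) be a backward Kantorovich operator such that T(0)(x) > −∞ for some x ∈ X. Define 𝒯(μ,ν) := sup_{g∈C(Y)} { ∫_Y g dν − ∫_X Tg dμ } for (μ,ν) ∈ P(X) × P(Y). Then 𝒯 is proper (finite at some pair), bounded below, jointly convex, and lower semicontinuous for the weak* topologies, and for every μ ∈ P(X) and g ∈ C(Y) one has sup_{ν∈P(Y)} { ∫_Y g dν − 𝒯(μ,ν) } = ∫_X Tg dμ (values in [−∞,+∞)). -/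
open MeasureTheory Topology Filter Set
open scoped ENNReal NNReal

noncomputable section

/-- The positive part of an extended real number, as an element of `ℝ≥0∞`. -/
def epos (a : EReal) : ℝ≥0∞ := if a = ⊤ then ⊤ else ENNReal.ofReal a.toReal

/-- Signed integral of an `EReal`-valued function (the natural value when `f` is
bounded above or bounded below). -/
def eint {α : Type*} [MeasurableSpace α] (μ : Measure α) (f : α → EReal) : EReal :=
  ((∫⁻ x, epos (f x) ∂μ : ℝ≥0∞) : EReal) - ((∫⁻ x, epos (-(f x)) ∂μ : ℝ≥0∞) : EReal)

/-- The Dirac measure at a point, as a probability measure. -/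
def diracP {α : Type*} [MeasurableSpace α] (x : α) : ProbabilityMeasure α :=
  ⟨Measure.dirac x, inferInstance⟩

/-- Membership in `USC(X)`: upper semicontinuous, bounded above, not identically `⊥`. -/
def IsUSCb {X : Type*} [TopologicalSpace X] (f : X → EReal) : Prop :=
  UpperSemicontinuous f ∧ (∃ M : ℝ, ∀ x, f x ≤ (M : EReal)) ∧ (∃ x, f x ≠ ⊥)

/-- A backward Kantorovich operator `T : C(Y) → USC(X)`: monotone, affine on the
constants, convex, and lower semicontinuous with respect to uniform convergence. -/
def IsBackwardKantorovich {X Y : Type*} [TopologicalSpace X] [TopologicalSpace Y]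
    [CompactSpace Y] (T : C(Y, ℝ) → X → EReal) : Prop :=
  (∀ g, IsUSCb (T g)) ∧
  (∀ g₁ g₂ : C(Y, ℝ), (∀ y, g₁ y ≤ g₂ y) → ∀ x, T g₁ x ≤ T g₂ x) ∧
  (∀ (g : C(Y, ℝ)) (c : ℝ) (x : X),
      T (g + ContinuousMap.const Y c) x = T g x + (c : EReal)) ∧
  (∀ (g₁ g₂ : C(Y, ℝ)) (l : ℝ), 0 ≤ l → l ≤ 1 → ∀ x,
      T (l • g₁ + (1 - l) • g₂) x ≤ (l : EReal) * T g₁ x + ((1 - l : ℝ) : EReal) * T g₂ x) ∧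
  (∀ (g : C(Y, ℝ)) (gn : ℕ → C(Y, ℝ)), Tendsto gn atTop (𝓝 g) →
      ∀ x, T g x ≤ liminf (fun n => T (gn n) x) atTop)

/-! For fixed `μ`, the functional `g ↦ ∫ T g dμ` is monotone, convex and equivariant under addition
of constants. Comparing `g` with `h + ‖g - h‖` shows that if it is finite at one `g`, then it is
finite everywhere and `1`-Lipschitz. By Hahn–Banach it is then a supremum of affine minorants;
their linear parts must be positive and send `1` to `1`, so by the Riesz representation theorem
they are integrals against probability measures `ν`. This gives the duality formula, and, at a
Dirac mass `μ`, properness. Convexity and lower semicontinuity hold because `𝒯` is a supremum of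
functions of `(μ, ν)` that are affine and lower semicontinuous, `μ ↦ ∫ T g dμ` being upper
semicontinuous. -/

section ExtendedIntegral

variable {α : Type*} [MeasurableSpace α] {μ : Measure α} {f g : α → EReal}

theorem toENNReal_sub_toENNReal_neg (a : EReal) :
    (a.toENNReal : EReal) - (-a).toENNReal = a := by
  simp only [EReal.coe_toENNReal_eq_max]
  rcases le_total 0 a with ha | ha
  · simp [ha]
  · simp [ha]

theorem toENNReal_add_add_toENNReal_neg_add_toENNReal_neg (a b : EReal) :
    (a + b).toENNReal + ((-a).toENNReal + (-b).toENNReal)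
      = a.toENNReal + b.toENNReal + (-(a + b)).toENNReal := by
  induction a with
  | bot => simp
  | top => induction b <;> simp
  | coe a =>
    induction b with
    | bot => simp
    | top => simp
    | coe b =>
      have hmax (x : ℝ) : max x 0 - max (-x) 0 = x := max_zero_sub_max_neg_zero_eq_self x
      apply EReal.coe_ennreal_injective
      simp only [← EReal.coe_add, ← EReal.coe_neg, EReal.real_coe_toENNReal,
        EReal.coe_ennreal_add, EReal.coe_ennreal_ofReal, EReal.coe_eq_coe_iff]
      linarith [hmax a, hmax b, hmax (a + b)]

theorem coe_ennreal_sub_eq_sub_of_add_eq_add {a b c d : ℝ≥0∞} (ha : a ≠ ⊤) (hc : c ≠ ⊤)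
    (h : a + d = c + b) : (a : EReal) - b = c - d := by
  lift a to ℝ≥0 using ha
  lift c to ℝ≥0 using hc
  induction b with
  | top =>
    obtain rfl : d = ⊤ := by simpa using h
    simp
  | coe b =>
    induction d with
    | top => simp [← ENNReal.coe_add] at h
    | coe d =>
      have h : (a + d : ℝ) = c + b := mod_cast h
      simp only [EReal.coe_nnreal_eq_coe_real]
      norm_cast
      linarith

theorem coe_ennreal_add_sub_add (a b c d : ℝ≥0∞) :
    ((a + c : ℝ≥0∞) : EReal) - (b + d : ℝ≥0∞) = (a - b) + (c - d) := by
  rw [EReal.coe_ennreal_add, EReal.coe_ennreal_add]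
  exact EReal.add_sub_add_comm (.inl (EReal.coe_ennreal_ne_bot b))
    (.inr (EReal.coe_ennreal_ne_bot d))

theorem coe_ennreal_ofReal_mul_sub_mul {r : ℝ} (hr : 0 ≤ r) (a b : ℝ≥0∞) :
    ((ENNReal.ofReal r * a : ℝ≥0∞) : EReal) - (ENNReal.ofReal r * b : ℝ≥0∞) = r * (a - b) := by
  rw [EReal.mul_sub_of_nonneg_of_ne_top (EReal.coe_nonneg.2 hr) (EReal.coe_ne_top r),
    EReal.coe_ennreal_mul, EReal.coe_ennreal_mul, EReal.coe_ennreal_ofReal, max_eq_left hr]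

theorem eint_def (μ : Measure α) (f : α → EReal) :
    eint μ f = (∫⁻ x, (f x).toENNReal ∂μ : ℝ≥0∞) - (∫⁻ x, (-f x).toENNReal ∂μ : ℝ≥0∞) :=
  rfl

theorem eint_mono (h : f ≤ g) : eint μ f ≤ eint μ g := by
  refine EReal.sub_le_sub (EReal.coe_ennreal_le_coe_ennreal_iff.2 (lintegral_mono fun x => ?_))
    (EReal.coe_ennreal_le_coe_ennreal_iff.2 (lintegral_mono fun x => ?_))
  · exact EReal.toENNReal_le_toENNReal (h x)
  · exact EReal.toENNReal_le_toENNReal (EReal.neg_le_neg_iff.2 (h x))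

theorem eint_ne_top (hf : ∫⁻ x, (f x).toENNReal ∂μ ≠ ⊤) : eint μ f ≠ ⊤ := by
  rw [eint_def, sub_eq_add_neg]
  exact EReal.add_ne_top (by simpa using hf) (by simp)

theorem eint_const [IsProbabilityMeasure μ] (a : EReal) : eint μ (fun _ => a) = a := by
  simp only [eint_def, lintegral_const, measure_univ, mul_one, toENNReal_sub_toENNReal_neg]

theorem eint_dirac (hf : Measurable f) (x : α) : eint (Measure.dirac x) f = f x := by
  rw [eint_def, lintegral_dirac' x (by fun_prop), lintegral_dirac' x (by fun_prop),
    toENNReal_sub_toENNReal_neg]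

theorem eint_neg_coe_ennreal (u : α → ℝ≥0∞) :
    eint μ (fun x => -(u x : EReal)) = -(∫⁻ x, u x ∂μ : ℝ≥0∞) := by
  simp only [eint_def, neg_neg, EReal.toENNReal_coe, lintegral_zero, EReal.coe_ennreal_zero,
    zero_sub, EReal.toENNReal_of_nonpos (EReal.neg_le_zero.2 (EReal.coe_ennreal_nonneg _))]

theorem eint_add (hfm : Measurable f) (hgm : Measurable g)
    (hf : ∫⁻ x, (f x).toENNReal ∂μ ≠ ⊤) (hg : ∫⁻ x, (g x).toENNReal ∂μ ≠ ⊤) :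
    eint μ (fun x => f x + g x) = eint μ f + eint μ g := by
  have hfg : ∫⁻ x, (f x + g x).toENNReal ∂μ ≠ ⊤ := by
    refine ne_top_of_le_ne_top (ENNReal.add_ne_top.2 ⟨hf, hg⟩) ?_
    rw [← lintegral_add_left (by fun_prop)]
    exact lintegral_mono fun x => EReal.toENNReal_add_le
  simp only [eint_def]
  rw [← coe_ennreal_add_sub_add]
  refine coe_ennreal_sub_eq_sub_of_add_eq_add hfg (ENNReal.add_ne_top.2 ⟨hf, hg⟩) ?_
  rw [← lintegral_add_left (by fun_prop), ← lintegral_add_left (by fun_prop),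
    ← lintegral_add_left (by fun_prop), ← lintegral_add_left (by fun_prop)]
  exact lintegral_congr fun x => toENNReal_add_add_toENNReal_neg_add_toENNReal_neg (f x) (g x)

theorem eint_const_mul {c : ℝ} (hc : 0 ≤ c) (f : α → EReal) :
    eint μ (fun x => c * f x) = c * eint μ f := by
  simp only [eint_def, ← mul_neg, EReal.toENNReal_mul (EReal.coe_nonneg.2 hc),
    EReal.real_coe_toENNReal]
  rw [lintegral_const_mul' _ _ ENNReal.ofReal_ne_top,
    lintegral_const_mul' _ _ ENNReal.ofReal_ne_top, coe_ennreal_ofReal_mul_sub_mul hc]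

theorem eint_add_measure (μ ν : Measure α) (f : α → EReal) :
    eint (μ + ν) f = eint μ f + eint ν f := by
  simp only [eint_def, lintegral_add_measure, coe_ennreal_add_sub_add]

theorem eint_nnreal_smul_measure (c : ℝ≥0) (μ : Measure α) (f : α → EReal) :
    eint (c • μ) f = (c : ℝ) * eint μ f := by
  rw [eint_def, eint_def, lintegral_smul_measure, lintegral_smul_measure,
    ← coe_ennreal_ofReal_mul_sub_mul c.coe_nonneg, ENNReal.ofReal_coe_nnreal]
  rfl

theorem lintegral_toENNReal_ne_top [IsFiniteMeasure μ] {M : ℝ} (hf : ∀ x, f x ≤ M) :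
    ∫⁻ x, (f x).toENNReal ∂μ ≠ ⊤ := by
  refine ne_top_of_le_ne_top ?_ (lintegral_mono fun x => EReal.toENNReal_le_toENNReal (hf x))
  rw [lintegral_const, EReal.real_coe_toENNReal]
  finiteness

theorem eint_add_const [IsProbabilityMeasure μ] (hfm : Measurable f)
    (hf : ∫⁻ x, (f x).toENNReal ∂μ ≠ ⊤) (c : ℝ) :
    eint μ (fun x => f x + c) = eint μ f + c := by
  rw [eint_add hfm measurable_const hf (lintegral_toENNReal_ne_top fun _ => le_rfl), eint_const]

theorem eint_eq_coe_sub_lintegral [IsProbabilityMeasure μ] (hfm : Measurable f) {M : ℝ}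
    (hf : ∀ x, f x ≤ M) : eint μ f = M - (∫⁻ x, (M - f x).toENNReal ∂μ : ℝ≥0∞) := by
  have hsub (x : α) : f x = -((M - f x).toENNReal : EReal) + M := by
    have h : 0 ≤ M - f x :=
      (EReal.sub_nonneg (.inl (EReal.coe_ne_top M)) (.inl (EReal.coe_ne_bot M))).2 (hf x)
    rw [EReal.coe_toENNReal h, EReal.neg_sub (by simp) (by simp), add_comm (-(M : EReal)),
      ← sub_eq_add_neg, EReal.sub_add_cancel]
  have hnonpos (x : α) : -((M - f x).toENNReal : EReal) ≤ (0 : ℝ) :=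
    EReal.neg_le_zero.2 (EReal.coe_ennreal_nonneg _)
  calc eint μ f = eint μ fun x => -((M - f x).toENNReal : EReal) + M := by simp only [← hsub]
    _ = -(∫⁻ x, (M - f x).toENNReal ∂μ : ℝ≥0∞) + M := by
      rw [eint_add_const (by fun_prop) (lintegral_toENNReal_ne_top hnonpos),
        eint_neg_coe_ennreal]
    _ = M - (∫⁻ x, (M - f x).toENNReal ∂μ : ℝ≥0∞) := by rw [add_comm, sub_eq_add_neg]

end ExtendedIntegral

section Semicontinuity

-- For `0 < a < ⊤` the sum is the largest multiple of `ε` strictly below `a`.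
theorem tsum_ite_succ_mul_lt_le (a ε : ℝ≥0∞) :
    ∑' k : ℕ, (if (k + 1) * ε < a then ε else 0) ≤ a := by
  refine ENNReal.tsum_le_of_sum_range_le fun n => le_trans ?_ (min_le_left a (n * ε))
  induction n with
  | zero => simp
  | succ n ih =>
    rw [Finset.sum_range_succ, Nat.cast_succ]
    split_ifs with h
    · have hle : ∑ k ∈ Finset.range n, (if (k + 1) * ε < a then ε else 0) + ε ≤ (n + 1) * ε := by
        rw [add_one_mul]
        gcongr
        exact ih.trans (min_le_right _ _)
      exact le_min (hle.trans h.le) hle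
    · rw [add_zero]
      exact ih.trans (by gcongr; exact le_self_add)

theorem le_tsum_ite_succ_mul_lt_add {ε : ℝ≥0∞} (hε : ε ≠ 0) (a : ℝ≥0∞) :
    a ≤ ∑' k : ℕ, (if (k + 1) * ε < a then ε else 0) + ε := by
  have hpartial (n : ℕ) : min a ((n + 1) * ε)
      ≤ ∑ k ∈ Finset.range n, (if (k + 1) * ε < a then ε else 0) + ε := by
    induction n with
    | zero => simp
    | succ n ih =>
      rw [Finset.sum_range_succ, Nat.cast_succ]
      split_ifs with h
      · rw [min_eq_right h.le] at ih
        exact (min_le_right _ _).trans (by rw [add_one_mul]; gcongr)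
      · rw [min_eq_left (not_lt.1 h)] at ih
        simpa using .inl ih
  refine le_of_forall_lt_imp_le_of_dense fun b hb => ?_
  obtain ⟨n, hn⟩ := ENNReal.exists_nat_mul_gt hε hb.ne_top
  calc b ≤ min a ((n + 1) * ε) := le_min hb.le (hn.le.trans (by gcongr; exact le_self_add))
    _ ≤ ∑ k ∈ Finset.range n, (if (k + 1) * ε < a then ε else 0) + ε := hpartial n
    _ ≤ ∑' k : ℕ, (if (k + 1) * ε < a then ε else 0) + ε := by
      gcongr
      exact ENNReal.sum_le_tsum _

variable {X : Type*} [TopologicalSpace X] [MeasurableSpace X] [OpensMeasurableSpace X]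
  [HasOuterApproxClosed X]

theorem lowerSemicontinuous_measure_of_isOpen {U : Set X} (hU : IsOpen U) :
    LowerSemicontinuous fun μ : ProbabilityMeasure X => (μ : Measure X) U :=
  lowerSemicontinuous_iff_le_liminf.2 fun _ =>
    ProbabilityMeasure.le_liminf_measure_open_of_tendsto tendsto_id hU

-- `ProbabilityMeasure X` need not be first countable, so Fatou's lemma along sequences does not
-- suffice; a staircase uniformly `ε`-close to `f` reduces the claim to superlevel sets of `f`.
theorem lowerSemicontinuous_lintegral {f : X → ℝ≥0∞} (hf : LowerSemicontinuous f) :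
    LowerSemicontinuous fun μ : ProbabilityMeasure X => ∫⁻ x, f x ∂(μ : Measure X) := by
  intro μ a ha
  obtain ⟨ε, hε, haε⟩ := ENNReal.lt_iff_exists_add_pos_lt.1 ha
  have hε' : (ε : ℝ≥0∞) ≠ 0 := by exact_mod_cast hε.ne'
  let s (x : X) : ℝ≥0∞ := ∑' k : ℕ, if (k + 1) * (ε : ℝ≥0∞) < f x then (ε : ℝ≥0∞) else 0
  have hopen (k : ℕ) : IsOpen {x | (k + 1) * (ε : ℝ≥0∞) < f x} := hf.isOpen_preimage _
  have hs (ν : ProbabilityMeasure X) : ∫⁻ x, s x ∂(ν : Measure X)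
      = ∑' k : ℕ, ε * (ν : Measure X) {x | (k + 1) * (ε : ℝ≥0∞) < f x} := by
    rw [lintegral_tsum fun k =>
      (Measurable.ite (hopen k).measurableSet measurable_const measurable_const).aemeasurable]
    simp only [← lintegral_indicator_const (hopen _).measurableSet, indicator_apply, mem_ofPred_eq]
  have hlsc : LowerSemicontinuous fun ν : ProbabilityMeasure X => ∫⁻ x, s x ∂(ν : Measure X) := by
    simp only [hs]
    refine lowerSemicontinuous_tsum fun k => ?_
    exact (ENNReal.continuous_const_mul ENNReal.coe_ne_top).comp_lowerSemicontinuous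
      (lowerSemicontinuous_measure_of_isOpen (hopen k)) fun _ _ h => mul_le_mul_right h _
  have has : a < ∫⁻ x, s x ∂(μ : Measure X) := by
    refine lt_of_add_lt_add_right (a := (ε : ℝ≥0∞)) (haε.trans_le ?_)
    calc ∫⁻ x, f x ∂(μ : Measure X) ≤ ∫⁻ x, (s x + ε) ∂(μ : Measure X) :=
          lintegral_mono fun x => le_tsum_ite_succ_mul_lt_add hε' (f x)
      _ = ∫⁻ x, s x ∂(μ : Measure X) + ε := by
        rw [lintegral_add_right _ measurable_const, lintegral_const, measure_univ, mul_one]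
  filter_upwards [hlsc μ a has] with ν hν
  exact hν.trans_le (lintegral_mono fun x => tsum_ite_succ_mul_lt_le (f x) ε)

theorem continuous_coe_sub (c : ℝ) : Continuous fun a : EReal => (c : EReal) - a := by
  refine continuous_iff_continuousAt.2 fun a => ?_
  exact (EReal.continuousAt_add (p := ((c : EReal), -a)) (.inl (EReal.coe_ne_top c))
    (.inl (EReal.coe_ne_bot c))).comp (f := fun b : EReal => ((c : EReal), -b))
    (by fun_prop)

theorem upperSemicontinuous_eint {f : X → EReal} (hf : UpperSemicontinuous f) {M : ℝ}
    (hM : ∀ x, f x ≤ M) :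
    UpperSemicontinuous fun μ : ProbabilityMeasure X => eint (μ : Measure X) f := by
  have hanti : Antitone fun a : EReal => (M : EReal) - a := fun a b hab =>
    EReal.sub_le_sub le_rfl hab
  have hlsc : LowerSemicontinuous fun x => (M - f x).toENNReal :=
    EReal.continuous_toENNReal.comp_lowerSemicontinuous
      ((continuous_coe_sub M).comp_upperSemicontinuous_antitone hf hanti)
      fun _ _ => EReal.toENNReal_le_toENNReal
  simp only [eint_eq_coe_sub_lintegral hf.measurable hM]
  exact (continuous_coe_sub M).comp_lowerSemicontinuous_antitone
    (continuous_coe_ennreal_ereal.comp_lowerSemicontinuous (lowerSemicontinuous_lintegral hlsc)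
      EReal.coe_ennreal_strictMono.monotone) hanti

end Semicontinuity

section ConvexExpectation

/-- A convex expectation on `C(Y, ℝ)`: a real functional that is monotone, equivariant under
addition of constants, and convex; `g ↦ Φ (-g)` is a convex risk measure. -/
structure IsConvexExpectation {Y : Type*} [TopologicalSpace Y] (Φ : C(Y, ℝ) → ℝ) : Prop where
  mono : Monotone Φ
  add_const (g : C(Y, ℝ)) (c : ℝ) : Φ (g + ContinuousMap.const Y c) = Φ g + c
  convexOn : ConvexOn ℝ univ Φ

theorem nonpos_of_forall_mul_le {x C : ℝ} (h : ∀ t, 0 ≤ t → t * x ≤ C) : x ≤ 0 := by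
  by_contra! hx
  have hC : 0 ≤ C := by simpa using h 0 le_rfl
  have := h ((C + 1) / x) (by positivity)
  rw [div_mul_cancel₀ _ hx.ne'] at this
  linarith

variable {Y : Type*} [TopologicalSpace Y]

namespace IsConvexExpectation

variable {Φ : C(Y, ℝ) → ℝ} (hΦ : IsConvexExpectation Φ)
include hΦ

theorem nonneg_of_affine_le {L : C(Y, ℝ) →ₗ[ℝ] ℝ} {c : ℝ} (hL : ∀ h, L h + c ≤ Φ h)
    {g : C(Y, ℝ)} (hg : 0 ≤ g) : 0 ≤ L g := by
  refine neg_nonpos.1 (nonpos_of_forall_mul_le (C := Φ 0 - c) fun t ht => ?_)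
  calc t * -L g = L (-(t • g)) := by simp
    _ ≤ Φ (-(t • g)) - c := le_sub_iff_add_le.2 (hL _)
    _ ≤ Φ 0 - c := sub_le_sub_right (hΦ.mono (neg_nonpos.2 (smul_nonneg ht hg))) c

theorem map_one_of_affine_le {L : C(Y, ℝ) →ₗ[ℝ] ℝ} {c : ℝ} (hL : ∀ h, L h + c ≤ Φ h) :
    L 1 = 1 := by
  have hline (t : ℝ) : t * (L 1 - 1) ≤ Φ 0 - c := by
    have hconst : ContinuousMap.const Y t = t • 1 := by ext; simp
    have := hL (0 + ContinuousMap.const Y t)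
    rw [hΦ.add_const, zero_add, hconst, map_smul, smul_eq_mul] at this
    linarith
  have hle : L 1 - 1 ≤ 0 := nonpos_of_forall_mul_le fun t _ => hline t
  have hge : -(L 1 - 1) ≤ 0 :=
    nonpos_of_forall_mul_le (C := Φ 0 - c) fun t _ => by linarith [hline (-t)]
  linarith

end IsConvexExpectation

variable [CompactSpace Y]

theorem le_add_const_norm_sub (g h : C(Y, ℝ)) : g ≤ h + ContinuousMap.const Y ‖g - h‖ :=
  fun y => sub_le_iff_le_add'.1 ((le_abs_self _).trans ((g - h).norm_coe_le_norm y))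

theorem exists_probabilityMeasure_integral_eq [T2Space Y] [MeasurableSpace Y] [BorelSpace Y]
    (L : C(Y, ℝ) →ₗ[ℝ] ℝ) (hL : ∀ g : C(Y, ℝ), 0 ≤ g → 0 ≤ L g) (hL1 : L 1 = 1) :
    ∃ ν : ProbabilityMeasure Y, ∀ g : C(Y, ℝ), ∫ y, g y ∂(ν : Measure Y) = L g := by
  let Λ : CompactlySupportedContinuousMap Y ℝ →ₚ[ℝ] ℝ :=
    PositiveLinearMap.mk₀
      { toFun := fun g => L g.toContinuousMap
        map_add' := fun f g => L.map_add f.toContinuousMap g.toContinuousMap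
        map_smul' := fun c f => L.map_smul c f.toContinuousMap }
      fun g hg => hL g.toContinuousMap hg
  have hint (g : C(Y, ℝ)) : ∫ y, g y ∂(RealRMK.rieszMeasure Λ) = L g :=
    RealRMK.integral_rieszMeasure Λ (CompactlySupportedContinuousMap.continuousMapEquiv g)
  have hprob : IsProbabilityMeasure (RealRMK.rieszMeasure Λ) := by
    have hone := hint 1
    simp only [ContinuousMap.one_apply, integral_const, smul_eq_mul, mul_one, hL1,
      Measure.real, ENNReal.toReal_eq_one_iff] at hone
    exact ⟨hone⟩
  exact ⟨⟨_, hprob⟩, hint⟩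

namespace IsConvexExpectation

variable {Φ : C(Y, ℝ) → ℝ} (hΦ : IsConvexExpectation Φ)
include hΦ

theorem lipschitzWith : LipschitzWith 1 Φ := LipschitzWith.of_le_add fun g h => by
  rw [dist_eq_norm, ← hΦ.add_const]
  exact hΦ.mono (le_add_const_norm_sub g h)

theorem exists_probabilityMeasure_affine_le [T2Space Y] [MeasurableSpace Y] [BorelSpace Y]
    {g : C(Y, ℝ)} {a : ℝ} (ha : a < Φ g) :
    ∃ ν : ProbabilityMeasure Y, ∀ h : C(Y, ℝ),
      ∫ y, h y ∂(ν : Measure Y) - Φ h ≤ ∫ y, g y ∂(ν : Measure Y) - a := by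
  obtain ⟨L, c, hle, hLg⟩ := hΦ.convexOn.exists_affine_le_of_lt (𝕜 := ℝ) (mem_univ g) ha
    isClosed_univ (hΦ.lipschitzWith.continuous.lowerSemicontinuous.lowerSemicontinuousOn _)
  have hL (h : C(Y, ℝ)) : L.toLinearMap h + c ≤ Φ h := hle ⟨h, mem_univ h⟩
  obtain ⟨ν, hν⟩ := exists_probabilityMeasure_integral_eq L.toLinearMap
    (fun _ => hΦ.nonneg_of_affine_le hL) (hΦ.map_one_of_affine_le hL)
  refine ⟨ν, fun h => ?_⟩
  have hLg : L.toLinearMap g + c = a := hLg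
  rw [hν, hν]
  linarith [hL h]

end IsConvexExpectation

end ConvexExpectation

section BackwardTransfer

/-- The transport functional `𝒯(μ, ν) = sup_g {∫ g dν - ∫ T g dμ}` associated with an operator
`T`, i.e. the Legendre dual of `g ↦ ∫ T g dμ` evaluated at `ν`. -/
def backwardTransfer {X Y : Type*} [MeasurableSpace X] [TopologicalSpace Y] [MeasurableSpace Y]
    (T : C(Y, ℝ) → X → EReal) (μ : ProbabilityMeasure X) (ν : ProbabilityMeasure Y) : EReal :=
  ⨆ g : C(Y, ℝ), ((∫ y, g y ∂(ν : Measure Y) : ℝ) : EReal) - eint (μ : Measure X) (T g)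

variable {X Y : Type*} [MeasurableSpace X] [TopologicalSpace Y] [MeasurableSpace Y]

theorem integral_sub_eint_le_backwardTransfer (T : C(Y, ℝ) → X → EReal)
    (μ : ProbabilityMeasure X) (ν : ProbabilityMeasure Y) (g : C(Y, ℝ)) :
    ((∫ y, g y ∂(ν : Measure Y) : ℝ) : EReal) - eint (μ : Measure X) (T g)
      ≤ backwardTransfer T μ ν :=
  le_iSup (fun g : C(Y, ℝ) =>
    ((∫ y, g y ∂(ν : Measure Y) : ℝ) : EReal) - eint (μ : Measure X) (T g)) g

theorem integral_eq_of_eq_smul_add_smul [CompactSpace Y] [OpensMeasurableSpace Y]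
    {ν₁ ν₂ ν : ProbabilityMeasure Y} {a b : ℝ≥0}
    (hν : (ν : Measure Y) = a • (ν₁ : Measure Y) + b • (ν₂ : Measure Y)) (g : C(Y, ℝ)) :
    ∫ y, g y ∂(ν : Measure Y)
      = a * ∫ y, g y ∂(ν₁ : Measure Y) + b * ∫ y, g y ∂(ν₂ : Measure Y) := by
  have hg (ν : ProbabilityMeasure Y) : Integrable g (ν : Measure Y) :=
    g.continuous.integrable_of_hasCompactSupport (HasCompactSupport.of_compactSpace g)
  rw [hν, integral_add_measure (hg ν₁).smul_measure_nnreal (hg ν₂).smul_measure_nnreal,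
    integral_smul_nnreal_measure, integral_smul_nnreal_measure, NNReal.smul_def, NNReal.smul_def,
    smul_eq_mul, smul_eq_mul]

theorem backwardTransfer_le_of_eq_smul_add_smul [CompactSpace Y] [OpensMeasurableSpace Y]
    {T : C(Y, ℝ) → X → EReal} (hT : ∀ (μ : ProbabilityMeasure X) g, eint (μ : Measure X) (T g) ≠ ⊤)
    {μ₁ μ₂ μ : ProbabilityMeasure X} {ν₁ ν₂ ν : ProbabilityMeasure Y} {a b : ℝ≥0}
    (hμ : (μ : Measure X) = a • (μ₁ : Measure X) + b • (μ₂ : Measure X))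
    (hν : (ν : Measure Y) = a • (ν₁ : Measure Y) + b • (ν₂ : Measure Y)) :
    backwardTransfer T μ ν
      ≤ ((a : ℝ) : EReal) * backwardTransfer T μ₁ ν₁
        + ((b : ℝ) : EReal) * backwardTransfer T μ₂ ν₂ := by
  have hcoe (c : ℝ≥0) : (0 : EReal) ≤ (c : ℝ) := EReal.coe_nonneg.2 c.coe_nonneg
  have hsmul (c : ℝ≥0) (μ : ProbabilityMeasure X) (g : C(Y, ℝ)) :
      ((c : ℝ) : EReal) * eint (μ : Measure X) (T g) ≠ ⊤ :=
    (EReal.mul_ne_top _ _).2 ⟨.inl (EReal.coe_ne_bot _), .inl (hcoe c), .inl (EReal.coe_ne_top _),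
      .inr (hT μ g)⟩
  refine iSup_le fun g => ?_
  calc ((∫ y, g y ∂(ν : Measure Y) : ℝ) : EReal) - eint (μ : Measure X) (T g)
      = (a : ℝ) * (((∫ y, g y ∂(ν₁ : Measure Y) : ℝ) : EReal) - eint (μ₁ : Measure X) (T g))
        + (b : ℝ) * (((∫ y, g y ∂(ν₂ : Measure Y) : ℝ) : EReal) - eint (μ₂ : Measure X) (T g)) := by
        rw [integral_eq_of_eq_smul_add_smul hν, hμ, eint_add_measure, eint_nnreal_smul_measure,
          eint_nnreal_smul_measure, EReal.coe_add, EReal.coe_mul, EReal.coe_mul,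
          EReal.add_sub_add_comm (.inr (hsmul b μ₂ g)) (.inl (hsmul a μ₁ g)),
          EReal.mul_sub_of_nonneg_of_ne_top (hcoe a) (EReal.coe_ne_top _),
          EReal.mul_sub_of_nonneg_of_ne_top (hcoe b) (EReal.coe_ne_top _)]
    _ ≤ (a : ℝ) * backwardTransfer T μ₁ ν₁ + (b : ℝ) * backwardTransfer T μ₂ ν₂ :=
      add_le_add
        (mul_le_mul_of_nonneg_left (integral_sub_eint_le_backwardTransfer T μ₁ ν₁ g) (hcoe a))
        (mul_le_mul_of_nonneg_left (integral_sub_eint_le_backwardTransfer T μ₂ ν₂ g) (hcoe b))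

theorem lowerSemicontinuous_backwardTransfer [TopologicalSpace X] [OpensMeasurableSpace X]
    [HasOuterApproxClosed X] [CompactSpace Y] [OpensMeasurableSpace Y] {T : C(Y, ℝ) → X → EReal}
    (hT : ∀ g, IsUSCb (T g)) :
    LowerSemicontinuous fun p : ProbabilityMeasure X × ProbabilityMeasure Y =>
      backwardTransfer T p.1 p.2 := by
  refine lowerSemicontinuous_iSup fun g => ?_
  obtain ⟨husc, ⟨M, hM⟩, -⟩ := hT g
  have hint : Continuous fun p : ProbabilityMeasure X × ProbabilityMeasure Y =>
      ((∫ y, g y ∂(p.2 : Measure Y) : ℝ) : EReal) :=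
    continuous_coe_real_ereal.comp
      ((ProbabilityMeasure.continuous_integral_boundedContinuousFunction
        (BoundedContinuousFunction.mkOfCompact g)).comp continuous_snd)
  have hneg : LowerSemicontinuous fun p : ProbabilityMeasure X × ProbabilityMeasure Y =>
      -eint (p.1 : Measure X) (T g) :=
    continuous_neg.comp_upperSemicontinuous_antitone
      ((upperSemicontinuous_eint husc hM).comp continuous_fst) fun _ _ => EReal.neg_le_neg_iff.2
  exact hint.lowerSemicontinuous.add' hneg fun p =>
    EReal.continuousAt_add (.inl (EReal.coe_ne_top _)) (.inl (EReal.coe_ne_bot _))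

end BackwardTransfer

namespace IsBackwardKantorovich

variable {X Y : Type*} [TopologicalSpace X] [MeasurableSpace X] [TopologicalSpace Y]
  [CompactSpace Y] {T : C(Y, ℝ) → X → EReal}

protected theorem lintegral_toENNReal_ne_top (hT : IsBackwardKantorovich T)
    (μ : ProbabilityMeasure X) (g : C(Y, ℝ)) : ∫⁻ x, (T g x).toENNReal ∂(μ : Measure X) ≠ ⊤ :=
  let ⟨_, hM⟩ := (hT.1 g).2.1
  lintegral_toENNReal_ne_top hM

protected theorem eint_ne_top (hT : IsBackwardKantorovich T) (μ : ProbabilityMeasure X)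
    (g : C(Y, ℝ)) : eint (μ : Measure X) (T g) ≠ ⊤ :=
  eint_ne_top (hT.lintegral_toENNReal_ne_top μ g)

theorem monotone_eint (hT : IsBackwardKantorovich T) (μ : ProbabilityMeasure X) :
    Monotone fun g => eint (μ : Measure X) (T g) :=
  fun g h hgh => eint_mono (hT.2.1 g h hgh)

theorem exists_coe_le_backwardTransfer [MeasurableSpace Y] (hT : IsBackwardKantorovich T) :
    ∃ m : ℝ, ∀ (μ : ProbabilityMeasure X) (ν : ProbabilityMeasure Y),
      (m : EReal) ≤ backwardTransfer T μ ν := by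
  obtain ⟨M, hM⟩ := (hT.1 0).2.1
  refine ⟨-M, fun μ ν => le_trans ?_ (integral_sub_eint_le_backwardTransfer T μ ν 0)⟩
  have hle : eint (μ : Measure X) (T 0) ≤ M := (eint_mono hM).trans_eq (eint_const _)
  simpa using hle

protected theorem measurable [OpensMeasurableSpace X] (hT : IsBackwardKantorovich T) (g : C(Y, ℝ)) :
    Measurable (T g) :=
  (hT.1 g).1.measurable

section OpensMeasurable

variable [OpensMeasurableSpace X] (hT : IsBackwardKantorovich T)
include hT

protected theorem eint_add_const (μ : ProbabilityMeasure X) (g : C(Y, ℝ)) (c : ℝ) :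
    eint (μ : Measure X) (T (g + ContinuousMap.const Y c)) = eint (μ : Measure X) (T g) + c := by
  rw [← eint_add_const (hT.measurable g) (hT.lintegral_toENNReal_ne_top μ g),
    funext (hT.2.2.1 g c)]

theorem eint_convex (μ : ProbabilityMeasure X) (g h : C(Y, ℝ)) {l : ℝ} (hl₀ : 0 ≤ l) (hl₁ : l ≤ 1) :
    eint (μ : Measure X) (T (l • g + (1 - l) • h))
      ≤ l * eint (μ : Measure X) (T g) + ((1 - l : ℝ) : EReal) * eint (μ : Measure X) (T h) := by
  have hfin {c : ℝ} (hc : 0 ≤ c) (g : C(Y, ℝ)) :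
      ∫⁻ x, ((c : EReal) * T g x).toENNReal ∂(μ : Measure X) ≠ ⊤ := by
    simp only [EReal.toENNReal_mul (EReal.coe_nonneg.2 hc), EReal.real_coe_toENNReal]
    rw [lintegral_const_mul' _ _ ENNReal.ofReal_ne_top]
    exact ENNReal.mul_ne_top ENNReal.ofReal_ne_top (hT.lintegral_toENNReal_ne_top μ g)
  have hl₁' : 0 ≤ 1 - l := sub_nonneg.2 hl₁
  rw [← eint_const_mul hl₀, ← eint_const_mul hl₁',
    ← eint_add ((hT.measurable g).const_mul _) ((hT.measurable h).const_mul _) (hfin hl₀ g)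
      (hfin hl₁' h)]
  exact eint_mono (hT.2.2.2.1 g h l hl₀ hl₁)

theorem eint_ne_bot {μ : ProbabilityMeasure X} {g : C(Y, ℝ)}
    (hg : eint (μ : Measure X) (T g) ≠ ⊥) (h : C(Y, ℝ)) :
    eint (μ : Measure X) (T h) ≠ ⊥ := by
  intro hh
  have hle : eint (μ : Measure X) (T g) ≤ eint (μ : Measure X) (T h) + ‖g - h‖ :=
    hT.eint_add_const μ h ‖g - h‖ ▸ hT.monotone_eint μ (le_add_const_norm_sub g h)
  rw [hh, EReal.bot_add, le_bot_iff] at hle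
  exact hg hle

theorem coe_toReal_eint {μ : ProbabilityMeasure X} {g : C(Y, ℝ)}
    (hg : eint (μ : Measure X) (T g) ≠ ⊥) (h : C(Y, ℝ)) :
    ((eint (μ : Measure X) (T h)).toReal : EReal) = eint (μ : Measure X) (T h) :=
  EReal.coe_toReal (hT.eint_ne_top μ h) (hT.eint_ne_bot hg h)

theorem isConvexExpectation {μ : ProbabilityMeasure X} {g₀ : C(Y, ℝ)}
    (hg₀ : eint (μ : Measure X) (T g₀) ≠ ⊥) :
    IsConvexExpectation fun g => (eint (μ : Measure X) (T g)).toReal := by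
  have hcoe := hT.coe_toReal_eint hg₀
  refine ⟨fun g h hgh => ?_, fun g c => ?_, convex_univ, fun g _ h _ l m hl hm hlm => ?_⟩
  · exact EReal.toReal_le_toReal (hT.monotone_eint μ hgh) (hT.eint_ne_bot hg₀ g)
      (hT.eint_ne_top μ h)
  · rw [hT.eint_add_const, EReal.toReal_add (hT.eint_ne_top μ g) (hT.eint_ne_bot hg₀ g)
      (EReal.coe_ne_top c) (EReal.coe_ne_bot c), EReal.toReal_coe]
  · obtain rfl : m = 1 - l := by linarith
    have hconv := hT.eint_convex μ g h hl (sub_nonneg.1 hm)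
    rw [← hcoe, ← hcoe g, ← hcoe h] at hconv
    exact_mod_cast hconv

theorem exists_backwardTransfer_le [T2Space Y] [MeasurableSpace Y] [BorelSpace Y]
    {μ : ProbabilityMeasure X} {g : C(Y, ℝ)} {a : ℝ} (ha : a < eint (μ : Measure X) (T g)) :
    ∃ ν : ProbabilityMeasure Y,
      backwardTransfer T μ ν ≤ ((∫ y, g y ∂(ν : Measure Y) - a : ℝ) : EReal) := by
  have hbot : eint (μ : Measure X) (T g) ≠ ⊥ := ha.ne_bot
  have hcoe := hT.coe_toReal_eint hbot
  rw [← hcoe, EReal.coe_lt_coe_iff] at ha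
  obtain ⟨ν, hν⟩ := (hT.isConvexExpectation hbot).exists_probabilityMeasure_affine_le ha
  refine ⟨ν, iSup_le fun h => ?_⟩
  rw [← hcoe h]
  exact_mod_cast hν h

theorem exists_backwardTransfer_ne_top [T2Space Y] [MeasurableSpace Y] [BorelSpace Y] :
    ∃ (μ : ProbabilityMeasure X) (ν : ProbabilityMeasure Y), backwardTransfer T μ ν ≠ ⊤ := by
  obtain ⟨x, hx⟩ := (hT.1 0).2.2
  rw [← eint_dirac (hT.measurable 0) x] at hx
  obtain ⟨a, -, ha⟩ := EReal.lt_iff_exists_real_btwn.1 (bot_lt_iff_ne_bot.2 hx)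
  obtain ⟨ν, hν⟩ := hT.exists_backwardTransfer_le (μ := diracP x) ha
  exact ⟨diracP x, ν, ne_top_of_le_ne_top (EReal.coe_ne_top _) hν⟩

theorem iSup_integral_sub_backwardTransfer [T2Space Y] [MeasurableSpace Y] [BorelSpace Y]
    (μ : ProbabilityMeasure X) (g : C(Y, ℝ)) :
    ⨆ ν : ProbabilityMeasure Y,
        (((∫ y, g y ∂(ν : Measure Y) : ℝ) : EReal) - backwardTransfer T μ ν)
      = eint (μ : Measure X) (T g) := by
  have hsub (r : ℝ) (a : EReal) : (r : EReal) - (r - a) = a := by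
    induction a <;> simp [← EReal.coe_sub]
  refine le_antisymm (iSup_le fun ν => ?_) (le_of_forall_lt fun b hb => ?_)
  · calc ((∫ y, g y ∂(ν : Measure Y) : ℝ) : EReal) - backwardTransfer T μ ν
        ≤ (∫ y, g y ∂(ν : Measure Y) : ℝ)
          - ((∫ y, g y ∂(ν : Measure Y) : ℝ) - eint (μ : Measure X) (T g)) :=
          EReal.sub_le_sub le_rfl (integral_sub_eint_le_backwardTransfer T μ ν g)
      _ = eint (μ : Measure X) (T g) := hsub _ _
  · obtain ⟨a, hba, ha⟩ := EReal.lt_iff_exists_real_btwn.1 hb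
    obtain ⟨ν, hν⟩ := hT.exists_backwardTransfer_le ha
    calc b < a := hba
      _ = (∫ y, g y ∂(ν : Measure Y) : ℝ) - ((∫ y, g y ∂(ν : Measure Y) : ℝ) - a) :=
        (hsub _ _).symm
      _ ≤ (∫ y, g y ∂(ν : Measure Y) : ℝ) - backwardTransfer T μ ν :=
        EReal.sub_le_sub le_rfl (by exact_mod_cast hν)
      _ ≤ _ := le_iSup (fun ν : ProbabilityMeasure Y =>
        ((∫ y, g y ∂(ν : Measure Y) : ℝ) : EReal) - backwardTransfer T μ ν) ν

end OpensMeasurable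

end IsBackwardKantorovich

theorem backwardKantorovich_gives_backwardLinearTransfer_general
    {X Y : Type*} [TopologicalSpace X] [HasOuterApproxClosed X] [MeasurableSpace X]
    [OpensMeasurableSpace X] [TopologicalSpace Y] [T2Space Y] [CompactSpace Y] [MeasurableSpace Y]
    [BorelSpace Y] (T : C(Y, ℝ) → X → EReal) (hT : IsBackwardKantorovich T)
    (𝒯 : ProbabilityMeasure X → ProbabilityMeasure Y → EReal)
    (h𝒯 : ∀ μ ν, 𝒯 μ ν = ⨆ g : C(Y, ℝ),
        (((∫ y, g y ∂(ν : Measure Y)) : ℝ) : EReal) - eint (μ : Measure X) (T g)) :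
    (∃ μ ν, 𝒯 μ ν ≠ ⊤ ∧ 𝒯 μ ν ≠ ⊥) ∧
    (∃ m : ℝ, ∀ μ ν, (m : EReal) ≤ 𝒯 μ ν) ∧
    (∀ (μ₁ μ₂ : ProbabilityMeasure X) (ν₁ ν₂ : ProbabilityMeasure Y)
        (μ : ProbabilityMeasure X) (ν : ProbabilityMeasure Y) (a b : ℝ≥0),
        a + b = 1 →
        (μ : Measure X) = a • (μ₁ : Measure X) + b • (μ₂ : Measure X) →
        (ν : Measure Y) = a • (ν₁ : Measure Y) + b • (ν₂ : Measure Y) →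
        𝒯 μ ν ≤ ((a : ℝ) : EReal) * 𝒯 μ₁ ν₁ + ((b : ℝ) : EReal) * 𝒯 μ₂ ν₂) ∧
    LowerSemicontinuous (fun p : ProbabilityMeasure X × ProbabilityMeasure Y => 𝒯 p.1 p.2) ∧
    (∀ (μ : ProbabilityMeasure X) (g : C(Y, ℝ)),
        (⨆ ν : ProbabilityMeasure Y,
          (((∫ y, g y ∂(ν : Measure Y)) : ℝ) : EReal) - 𝒯 μ ν) = eint (μ : Measure X) (T g)) := by
  obtain rfl : 𝒯 = backwardTransfer T := funext₂ h𝒯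
  obtain ⟨m, hm⟩ := hT.exists_coe_le_backwardTransfer
  obtain ⟨μ₀, ν₀, hfin⟩ := hT.exists_backwardTransfer_ne_top
  exact ⟨⟨μ₀, ν₀, hfin, ne_bot_of_le_ne_bot (EReal.coe_ne_bot m) (hm μ₀ ν₀)⟩,
    ⟨m, hm⟩,
    fun _ _ _ _ _ _ _ _ _ => backwardTransfer_le_of_eq_smul_add_smul hT.eint_ne_top,
    lowerSemicontinuous_backwardTransfer hT.1,
    hT.iSup_integral_sub_backwardTransfer⟩

/-- From a backward Kantorovich operator `T` one builds a backward linear transfer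
`𝒯(μ,ν) = sup_g { ∫ g dν − ∫ Tg dμ }`: it is proper, bounded below, jointly convex,
weak*-lower semicontinuous, and `T` realises the Legendre transform of `𝒯(μ,·)`. -/
theorem backwardKantorovich_gives_backwardLinearTransfer
    {X Y : Type*} [MetricSpace X] [CompactSpace X] [MeasurableSpace X] [BorelSpace X]
    [MetricSpace Y] [CompactSpace Y] [MeasurableSpace Y] [BorelSpace Y]
    (T : C(Y, ℝ) → X → EReal) (hT : IsBackwardKantorovich T)
    (𝒯 : ProbabilityMeasure X → ProbabilityMeasure Y → EReal)
    (h𝒯 : ∀ μ ν, 𝒯 μ ν = ⨆ g : C(Y, ℝ),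
        (((∫ y, g y ∂(ν : Measure Y)) : ℝ) : EReal) - eint (μ : Measure X) (T g)) :
    (∃ μ ν, 𝒯 μ ν ≠ ⊤ ∧ 𝒯 μ ν ≠ ⊥) ∧
    (∃ m : ℝ, ∀ μ ν, (m : EReal) ≤ 𝒯 μ ν) ∧
    (∀ (μ₁ μ₂ : ProbabilityMeasure X) (ν₁ ν₂ : ProbabilityMeasure Y)
        (μ : ProbabilityMeasure X) (ν : ProbabilityMeasure Y) (a b : ℝ≥0),
        a + b = 1 →
        (μ : Measure X) = a • (μ₁ : Measure X) + b • (μ₂ : Measure X) →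
        (ν : Measure Y) = a • (ν₁ : Measure Y) + b • (ν₂ : Measure Y) →
        𝒯 μ ν ≤ ((a : ℝ) : EReal) * 𝒯 μ₁ ν₁ + ((b : ℝ) : EReal) * 𝒯 μ₂ ν₂) ∧
    LowerSemicontinuous (fun p : ProbabilityMeasure X × ProbabilityMeasure Y => 𝒯 p.1 p.2) ∧
    (∀ (μ : ProbabilityMeasure X) (g : C(Y, ℝ)),
        (⨆ ν : ProbabilityMeasure Y,
          (((∫ y, g y ∂(ν : Measure Y)) : ℝ) : EReal) - 𝒯 μ ν) = eint (μ : Measure X) (T g)) :=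
  backwardKantorovich_gives_backwardLinearTransfer_general T hT 𝒯 h𝒯
end
end

section
/- Let X and Y be compact metric spaces and let c : X × P(Y) → (−∞,+∞] be proper, bounded below, lower semicontinuous, and convex in the second variable. Extend the operator T to all upper semicontinuous bounded-above functions g : Y → [−∞,∞) by Tg(x) := sup_{σ∈P(Y)} { ∫_Y g dσ − c(x,σ) } (integral with values in [−∞,∞)). Then for every upper semicontinuous bounded-above g one has Tg(x) = inf{ Th(x) : h ∈ C(Y), h ≥ g } for all x ∈ X, and Tg is upper semicontinuous on X. -/
open MeasureTheory Topology Filter Set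
open scoped ENNReal NNReal

noncomputable section

/-- The extension of the operator associated to a cost `c` to extended-real-valued
functions, `Tg(x) = sup_{σ ∈ P(Y)} { ∫ g dσ − c(x,σ) }`. -/
def costOpE {X Y : Type*} [MeasurableSpace Y]
    (c : X → ProbabilityMeasure Y → EReal) (g : Y → EReal) (x : X) : EReal :=
  ⨆ σ : ProbabilityMeasure Y, eint (σ : Measure Y) g - c x σ

/-!
An upper semicontinuous `g` that is bounded above is the infimum of its continuous majorants: if
`g y₀ < b`, Urysohn's lemma gives a continuous function equal to `b` at `y₀`, at least `b`
everywhere, and at least `sup g` outside the open set `{g < b}`. Since `Y` is hereditarily Lindelöf,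
countably many majorants suffice, and their running minima `f n` decrease to `g`. By monotone
convergence `∫ f n dσ` decreases to `∫ g dσ` for each `σ`, and `sup_σ` commutes with `inf_n` because
the functions `σ ↦ ∫ f n dσ - c(x, σ)` are upper semicontinuous on the compact space `P(Y)`.
Finally, `Th` is upper semicontinuous for continuous `h`, hence so is the infimum `Tg`.
-/

section Semicontinuity

theorem iSup_iInf_eq_iInf_iSup_of_upperSemicontinuous {ι S γ : Type*} [Nonempty ι]
    [TopologicalSpace S] [CompactSpace S] [CompleteLinearOrder γ] [DenselyOrdered γ]
    {F : ι → S → γ} (hF : ∀ i, UpperSemicontinuous (F i)) (hdir : Directed (· ≥ ·) F) :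
    ⨆ s, ⨅ i, F i s = ⨅ i, ⨆ s, F i s := by
  refine le_antisymm (iSup_iInf_le_iInf_iSup _) (le_of_forall_lt_imp_le_of_dense fun t ht => ?_)
  have hclosed (i : ι) : IsClosed (F i ⁻¹' Ici t) := (hF i).isClosed_preimage t
  have hnonempty (i : ι) : (F i ⁻¹' Ici t).Nonempty := by
    obtain ⟨s, hs⟩ := lt_iSup_iff.1 (ht.trans_le (iInf_le _ i))
    exact ⟨s, hs.le⟩
  obtain ⟨s, hs⟩ := IsCompact.nonempty_iInter_of_directed_nonempty_isCompact_isClosed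
    (fun i => F i ⁻¹' Ici t)
    (hdir.mono_comp (g := fun G : S → γ => G ⁻¹' Ici t) _ fun _ _ hle s hs => le_trans hs (hle s))
    hnonempty (fun i => (hclosed i).isCompact) hclosed
  exact (le_iInf fun i => mem_iInter.1 hs i).trans (le_iSup (fun s => ⨅ i, F i s) s)

theorem upperSemicontinuous_iSup_of_compactSpace {X S γ : Type*} [TopologicalSpace X]
    [TopologicalSpace S] [CompactSpace S] [CompleteLinearOrder γ] [DenselyOrdered γ]
    {F : X → S → γ} (hF : UpperSemicontinuous fun p : X × S => F p.1 p.2) :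
    UpperSemicontinuous fun x => ⨆ s, F x s := by
  intro x t ht
  obtain ⟨t', hsup, ht'⟩ := exists_between ht
  have hnhds : ∀ᶠ x' in 𝓝 x, ∀ s ∈ univ, F x' s < t' :=
    isCompact_univ.eventually_forall_of_forall_eventually fun s _ =>
      hF (x, s) t' ((le_iSup (F x) s).trans_lt hsup)
  filter_upwards [hnhds] with x' hx'
  exact (iSup_le fun s => (hx' s (mem_univ s)).le).trans_lt ht'

end Semicontinuity

section ContinuousMajorants

variable {Y : Type*} [TopologicalSpace Y] {g : Y → EReal}

theorem exists_continuousMap_ge_lt_of_upperSemicontinuous [CompletelyRegularSpace Y]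
    (hg : UpperSemicontinuous g) (hgbdd : ∃ M : ℝ, ∀ y, g y ≤ M) {y₀ : Y} {a : EReal}
    (ha : g y₀ < a) : ∃ h : C(Y, ℝ), (∀ y, g y ≤ h y) ∧ (h y₀ : EReal) < a := by
  obtain ⟨M, hM⟩ := hgbdd
  obtain ⟨b, hgb, hba⟩ := EReal.lt_iff_exists_real_btwn.1 ha
  obtain ⟨φ, hφ, hφ₀, hφ₁⟩ := CompletelyRegularSpace.completely_regular_isOpen y₀ (g ⁻¹' Iio b)
    (hg.isOpen_preimage b) hgb
  refine ⟨⟨fun y => b + φ y * |M - b|, by fun_prop⟩, fun y => ?_, by simpa [hφ₀] using hba⟩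
  by_cases hy : g y < b
  · have hb : b ≤ b + φ y * |M - b| :=
      le_add_of_nonneg_right (mul_nonneg (φ y).2.1 (abs_nonneg _))
    exact hy.le.trans (EReal.coe_le_coe_iff.2 hb)
  · have hφy : φ y = 1 := hφ₁ hy
    have hMb : M ≤ b + φ y * |M - b| := by
      simpa [hφy] using sub_le_iff_le_add'.1 (le_abs_self (M - b))
    exact (hM y).trans (EReal.coe_le_coe_iff.2 hMb)

theorem isGLB_continuousMap_ge_of_upperSemicontinuous [CompletelyRegularSpace Y]
    (hg : UpperSemicontinuous g) (hgbdd : ∃ M : ℝ, ∀ y, g y ≤ M) :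
    IsGLB ((fun (h : C(Y, ℝ)) y => (h y : EReal)) '' {h | ∀ y, g y ≤ h y}) g := by
  refine ⟨forall_mem_image.2 fun h hh => hh, fun k hk y => le_of_forall_gt fun a ha => ?_⟩
  obtain ⟨h, hgh, hha⟩ := exists_continuousMap_ge_lt_of_upperSemicontinuous hg hgbdd ha
  exact (hk (mem_image_of_mem _ hgh) y).trans_lt hha

theorem exists_antitone_continuousMap_iInf_eq_iInf (h : ℕ → C(Y, ℝ)) :
    ∃ f : ℕ → C(Y, ℝ), Antitone f ∧ ∀ y, ⨅ n, (f n y : EReal) = ⨅ n, (h n y : EReal) := by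
  let f (n : ℕ) : C(Y, ℝ) := (Finset.range (n + 1)).inf' Finset.nonempty_range_add_one h
  have hfh (n : ℕ) : f n ≤ h n := Finset.inf'_le h (Finset.self_mem_range_succ n)
  refine ⟨f, fun m n hmn => Finset.inf'_mono h (by gcongr) _, fun y => le_antisymm
    (iInf_mono fun n => EReal.coe_le_coe_iff.2 (hfh n y)) (le_iInf fun n => ?_)⟩
  obtain ⟨k, -, hk⟩ := Finset.exists_mem_eq_inf' Finset.nonempty_range_add_one fun k => h k y
  rw [show f n y = h k y from (ContinuousMap.inf'_apply _ _ _).trans hk]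
  exact iInf_le _ k

theorem exists_antitone_continuousMap_iInf_eq_of_upperSemicontinuous [CompletelyRegularSpace Y]
    [HereditarilyLindelofSpace Y] (hg : UpperSemicontinuous g) (hgbdd : ∃ M : ℝ, ∀ y, g y ≤ M) :
    ∃ f : ℕ → C(Y, ℝ), Antitone f ∧ ∀ y, ⨅ n, (f n y : EReal) = g y := by
  obtain ⟨F, hF, hFcount, hFglb⟩ := exists_countable_upperSemicontinuous_isGLB
    (forall_mem_image.2 fun h _ =>
      (continuous_coe_real_ereal.comp h.continuous).upperSemicontinuous)
    (isGLB_continuousMap_ge_of_upperSemicontinuous hg hgbdd)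
  obtain ⟨M, hM⟩ := hgbdd
  -- The constant `M` is added because `F` may be empty when `Y` is.
  obtain ⟨u, hu⟩ := (hFcount.insert fun _ => (M : EReal)).exists_eq_range (insert_nonempty _ _)
  have hu_mem (n : ℕ) : ∃ h : C(Y, ℝ), (fun y => (h y : EReal)) = u n := by
    rcases hu.symm ▸ mem_range_self n with hn | hn
    · exact ⟨.const Y M, hn.symm⟩
    · exact image_subset_range _ _ (hF hn)
  choose h hh using hu_mem
  have hglb : IsGLB (range u) g := by
    rw [← hu, ← inf_eq_right.2 (show g ≤ fun _ => (M : EReal) from hM)]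
    exact hFglb.insert _
  obtain ⟨f, hanti, hf⟩ := exists_antitone_continuousMap_iInf_eq_iInf h
  refine ⟨f, hanti, fun y => (hf y).trans ?_⟩
  rw [← hglb.iInf_eq, iInf_apply]
  exact iInf_congr fun n => congrFun (hh n) y

end ContinuousMajorants

theorem continuous_ereal_sub_const {c : EReal} (hc : c ≠ ⊥) : Continuous fun a => a - c := by
  rcases eq_or_ne c ⊤ with rfl | hc'
  · simpa only [EReal.sub_top] using continuous_const
  · refine continuous_iff_continuousAt.2 fun a => ?_
    exact (EReal.continuousAt_add (p := (a, -c)) (.inr (by simpa using hc'))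
      (.inr (by simpa using hc))).comp (f := fun a => (a, -c)) (by fun_prop)

section SignedIntegral

variable {α : Type*} [MeasurableSpace α] {μ : Measure α}

theorem epos_eq_toENNReal : epos = EReal.toENNReal := rfl

theorem eint_mono_ae {f g : α → EReal} (h : f ≤ᵐ[μ] g) : eint μ f ≤ eint μ g := by
  simp only [eint, epos_eq_toENNReal]
  refine EReal.sub_le_sub (EReal.coe_ennreal_le_coe_ennreal_iff.2 (lintegral_mono_ae ?_))
    (EReal.coe_ennreal_le_coe_ennreal_iff.2 (lintegral_mono_ae ?_))
  · exact h.mono fun x hx => EReal.toENNReal_le_toENNReal hx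
  · exact h.mono fun x hx => EReal.toENNReal_le_toENNReal (EReal.neg_le_neg_iff.2 hx)

theorem eint_coe {f : α → ℝ} (hf : Integrable f μ) :
    eint μ (fun x => (f x : EReal)) = (∫ x, f x ∂μ : ℝ) := by
  have hpos : ∫⁻ x, ENNReal.ofReal (f x) ∂μ ≠ ⊤ := hf.lintegral_lt_top.ne
  have hneg : ∫⁻ x, ENNReal.ofReal (-f x) ∂μ ≠ ⊤ := hf.neg.lintegral_lt_top.ne
  rw [integral_eq_lintegral_pos_part_sub_lintegral_neg_part hf, EReal.coe_sub,
    EReal.coe_ennreal_toReal hpos, EReal.coe_ennreal_toReal hneg]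
  simp only [eint, epos_eq_toENNReal, ← EReal.coe_neg, EReal.real_coe_toENNReal]

theorem eint_iInf_of_antitone {f : ℕ → α → EReal} (hf : ∀ n, AEMeasurable (f n) μ)
    (hanti : ∀ᵐ x ∂μ, Antitone fun n => f n x) (hfin : ∫⁻ x, epos (f 0 x) ∂μ ≠ ⊤) :
    eint μ (fun x => ⨅ n, f n x) = ⨅ n, eint μ (f n) := by
  have hlim : ∀ᵐ x ∂μ, Tendsto (fun n => f n x) atTop (𝓝 (⨅ n, f n x)) :=
    hanti.mono fun x hx => tendsto_atTop_iInf hx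
  have hpos : Tendsto (fun n => ∫⁻ x, epos (f n x) ∂μ) atTop
      (𝓝 (∫⁻ x, epos (⨅ n, f n x) ∂μ)) := by
    rw [epos_eq_toENNReal] at hfin ⊢
    exact lintegral_tendsto_of_tendsto_of_antitone
      (fun n => EReal.continuous_toENNReal.measurable.comp_aemeasurable (hf n))
      (hanti.mono fun x hx m n hmn => EReal.toENNReal_le_toENNReal (hx hmn)) hfin
      (hlim.mono fun x hx => (EReal.continuous_toENNReal.tendsto _).comp hx)
  have hneg : Tendsto (fun n => ∫⁻ x, epos (-f n x) ∂μ) atTop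
      (𝓝 (∫⁻ x, epos (-⨅ n, f n x) ∂μ)) := by
    have hcont : Continuous fun a : EReal => epos (-a) :=
      EReal.continuous_toENNReal.comp continuous_neg
    exact lintegral_tendsto_of_tendsto_of_monotone
      (fun n => hcont.measurable.comp_aemeasurable (hf n))
      (hanti.mono fun x hx m n hmn =>
        EReal.toENNReal_le_toENNReal (EReal.neg_le_neg_iff.2 (hx hmn)))
      (hlim.mono fun x hx => (hcont.tendsto _).comp hx)
  have hfin' : ∫⁻ x, epos (⨅ n, f n x) ∂μ ≠ ⊤ :=
    ne_top_of_le_ne_top hfin (lintegral_mono fun x => EReal.toENNReal_le_toENNReal (iInf_le _ 0))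
  have hanti' : Antitone fun n => eint μ (f n) := fun m n hmn =>
    eint_mono_ae (hanti.mono fun x hx => hx hmn)
  refine tendsto_nhds_unique ?_ (tendsto_atTop_iInf hanti')
  simp only [eint, sub_eq_add_neg]
  exact (EReal.continuousAt_add (.inl (by simpa using hfin'))
    (.inl (EReal.coe_ennreal_ne_bot _))).tendsto.comp
    ((EReal.tendsto_coe_ennreal.2 hpos).prodMk_nhds (EReal.tendsto_coe_ennreal.2 hneg).neg)

end SignedIntegral

section CostOperator

variable {X Y : Type*} [MeasurableSpace Y] {c : X → ProbabilityMeasure Y → EReal}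

theorem costOpE_mono {f g : Y → EReal} (h : f ≤ g) (x : X) : costOpE c f x ≤ costOpE c g x :=
  iSup_mono fun _ => EReal.sub_le_sub (eint_mono_ae (.of_forall h)) le_rfl

variable [TopologicalSpace Y] [CompactSpace Y]

theorem upperSemicontinuous_eint_coe_sub [OpensMeasurableSpace Y] {Z : Type*} [TopologicalSpace Z]
    (h : C(Y, ℝ)) {σ : Z → ProbabilityMeasure Y} (hσ : Continuous σ) {v : Z → EReal}
    (hv : LowerSemicontinuous v) :
    UpperSemicontinuous fun z => eint (σ z : Measure Y) (fun y => (h y : EReal)) - v z := by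
  simp only [eint_coe (h.continuous.integrable_of_hasCompactSupport
    (HasCompactSupport.of_compactSpace _)), sub_eq_add_neg]
  have hcont : Continuous fun z => ∫ y, h y ∂(σ z : Measure Y) :=
    (ProbabilityMeasure.continuous_integral_boundedContinuousFunction
      (BoundedContinuousFunction.mkOfCompact h)).comp hσ
  exact UpperSemicontinuous.add' (continuous_coe_real_ereal.comp hcont).upperSemicontinuous
    (continuous_neg.comp_lowerSemicontinuous_antitone hv fun _ _ => EReal.neg_le_neg_iff.2)
    fun z => EReal.continuousAt_add (.inl (EReal.coe_ne_top _)) (.inl (EReal.coe_ne_bot _))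

variable [T2Space Y] [BorelSpace Y]

theorem upperSemicontinuous_costOpE_coe [TopologicalSpace X]
    (hlsc : LowerSemicontinuous fun p : X × ProbabilityMeasure Y => c p.1 p.2) (h : C(Y, ℝ)) :
    UpperSemicontinuous (costOpE c fun y => (h y : EReal)) :=
  upperSemicontinuous_iSup_of_compactSpace (upperSemicontinuous_eint_coe_sub h continuous_snd hlsc)

theorem costOpE_iInf_of_antitone {x : X} (hbot : ∀ σ, c x σ ≠ ⊥)
    (hlsc : LowerSemicontinuous (c x)) {f : ℕ → C(Y, ℝ)} (hanti : Antitone f) :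
    costOpE c (fun y => ⨅ n, (f n y : EReal)) x = ⨅ n, costOpE c (fun y => (f n y : EReal)) x := by
  have hanti' (y : Y) : Antitone fun n => (f n y : EReal) := fun m n hmn =>
    EReal.coe_le_coe_iff.2 (hanti hmn y)
  have hpayoff (σ : ProbabilityMeasure Y) :
      eint (σ : Measure Y) (fun y => ⨅ n, (f n y : EReal)) - c x σ =
        ⨅ n, (eint (σ : Measure Y) (fun y => (f n y : EReal)) - c x σ) := by
    have hint : Integrable (f 0) (σ : Measure Y) :=
      (f 0).continuous.integrable_of_hasCompactSupport (HasCompactSupport.of_compactSpace _)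
    have hfin : ∫⁻ y, epos (f 0 y : EReal) ∂(σ : Measure Y) ≠ ⊤ := hint.lintegral_lt_top.ne
    rw [eint_iInf_of_antitone
      (fun n => (f n).continuous.measurable.coe_real_ereal.aemeasurable) (.of_forall hanti') hfin]
    exact Monotone.map_ciInf_of_continuousAt (continuous_ereal_sub_const (hbot σ)).continuousAt
      fun _ _ hab => EReal.sub_le_sub hab le_rfl
  simp only [costOpE, hpayoff]
  refine iSup_iInf_eq_iInf_iSup_of_upperSemicontinuous
    (fun n => upperSemicontinuous_eint_coe_sub (f n) continuous_id hlsc) (Antitone.directed_ge ?_)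
  exact fun m n hmn σ =>
    EReal.sub_le_sub (eint_mono_ae (.of_forall fun y => hanti' y hmn)) le_rfl

end CostOperator

theorem costOpE_eq_iInf_continuous_general
    {X Y : Type*} [TopologicalSpace X]
    [TopologicalSpace Y] [CompactSpace Y] [T2Space Y] [HereditarilyLindelofSpace Y]
    [MeasurableSpace Y] [BorelSpace Y] {c : X → ProbabilityMeasure Y → EReal}
    (hbot : ∀ x σ, c x σ ≠ ⊥)
    (hlsc : LowerSemicontinuous (fun p : X × ProbabilityMeasure Y => c p.1 p.2))
    {g : Y → EReal} (hg : UpperSemicontinuous g) (hgbdd : ∃ M : ℝ, ∀ y, g y ≤ (M : EReal)) :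
    (∀ x, costOpE c g x =
        ⨅ h ∈ {h : C(Y, ℝ) | ∀ y, g y ≤ ((h y : ℝ) : EReal)},
          costOpE c (fun y => ((h y : ℝ) : EReal)) x) ∧
    UpperSemicontinuous (costOpE c g) := by
  obtain ⟨f, hanti, hfg⟩ := exists_antitone_continuousMap_iInf_eq_of_upperSemicontinuous hg hgbdd
  have hformula (x : X) : costOpE c g x =
      ⨅ h ∈ {h : C(Y, ℝ) | ∀ y, g y ≤ h y}, costOpE c (fun y => (h y : EReal)) x := by
    refine le_antisymm (le_iInf₂ fun h hh => costOpE_mono hh x) ?_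
    calc ⨅ h ∈ {h : C(Y, ℝ) | ∀ y, g y ≤ h y}, costOpE c (fun y => (h y : EReal)) x
        ≤ ⨅ n, costOpE c (fun y => (f n y : EReal)) x :=
          le_iInf fun n => iInf₂_le (f n) fun y => (hfg y).symm.trans_le (iInf_le _ n)
      _ = costOpE c (fun y => ⨅ n, (f n y : EReal)) x :=
          (costOpE_iInf_of_antitone (hbot x)
            (LowerSemicontinuous.comp (f := fun p : X × _ => c p.1 p.2) hlsc
              (Continuous.prodMk_right x)) hanti).symm
      _ = costOpE c g x := by simp only [hfg]
  refine ⟨hformula, ?_⟩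
  rw [funext hformula]
  exact upperSemicontinuous_biInf fun h _ => upperSemicontinuous_costOpE_coe hlsc h

/-- For an upper semicontinuous bounded-above `g`, the extended operator is the
infimum of its values over continuous majorants of `g`, and `Tg` is upper
semicontinuous. -/
theorem costOpE_eq_iInf_continuous
    {X Y : Type*} [MetricSpace X] [CompactSpace X] [MeasurableSpace X] [BorelSpace X]
    [MetricSpace Y] [CompactSpace Y] [MeasurableSpace Y] [BorelSpace Y]
    (c : X → ProbabilityMeasure Y → EReal)
    (hbot : ∀ x σ, c x σ ≠ ⊥)
    (hbdd : ∃ m : ℝ, ∀ x σ, (m : EReal) ≤ c x σ)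
    (hproper : ∀ x, ∃ σ, c x σ ≠ ⊤)
    (hlsc : LowerSemicontinuous (fun p : X × ProbabilityMeasure Y => c p.1 p.2))
    (hconv : ∀ (x : X) (σ₁ σ₂ τ : ProbabilityMeasure Y) (a b : ℝ≥0), a + b = 1 →
        (τ : Measure Y) = a • (σ₁ : Measure Y) + b • (σ₂ : Measure Y) →
        c x τ ≤ ((a : ℝ) : EReal) * c x σ₁ + ((b : ℝ) : EReal) * c x σ₂)
    (g : Y → EReal) (hg : UpperSemicontinuous g) (hgbdd : ∃ M : ℝ, ∀ y, g y ≤ (M : EReal)) :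
    (∀ x, costOpE c g x =
        ⨅ h ∈ {h : C(Y, ℝ) | ∀ y, g y ≤ ((h y : ℝ) : EReal)},
          costOpE c (fun y => ((h y : ℝ) : EReal)) x) ∧
    UpperSemicontinuous (costOpE c g) := by
  exact costOpE_eq_iInf_continuous_general hbot hlsc hg hgbdd
end
end
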